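/- There exists an absolute constant C > 0 such that for every θ ∈ (0,1) and every positive integer n, ∫_{A} G(s,t,u,v) ds dt du dv ≤ C · n^{2-θ} θ^{-1} (1-θ)^{-3}, and there exists an absolute constant c > 0 such that this integral is ≥ c · n^{2-θ} θ^{-1} (1-θ)^{-3} whenever additionally n^{1-θ} ≥ 8; here A = { (s,t,u,v) ∈ (0,∞)⁴ : 0 < u < 1, 1 ≤ v < n^{1/2}, s < n^{1/4} u^{1/2}, t ≥ u^{-1/2} v^{-1/2} s }. -/

import Mathlib

open MeasureTheory Set Real

/-- The integrand `G(s,t,u,v)` from the paper's computation of the completely 1-summing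
norm of the identity `OH_n → ℓ^n_p`, with `θ = 2/p'`. Here `p = (s, t, u, v)`. -/
noncomputable def G (θ : ℝ) (n : ℕ) (p : ℝ × ℝ × ℝ × ℝ) : ℝ :=
  (n : ℝ) ^ (2 : ℕ) * p.1 ^ (-1 - 2 * θ) * p.2.1 ^ (-1 - 2 * θ) *
    min (min (min ((n : ℝ)⁻¹ * p.1 ^ (4 : ℝ) * p.2.2.1 ^ (-2 : ℝ) * p.2.2.2 ^ (-2 : ℝ))
                  ((n : ℝ)⁻¹ * p.2.1 ^ (4 : ℝ)))
             (min (p.1 ^ (4 : ℝ) * p.2.2.1 ^ (-2 : ℝ)) (p.2.1 ^ (4 : ℝ) * p.2.2.2 ^ (-2 : ℝ))))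
        (min (min (p.2.2.1 ^ (-2 : ℝ) * p.2.2.2 ^ (-2 : ℝ)) (p.2.2.1 ^ (-2 : ℝ)))
             (min 1 (p.2.2.2 ^ (-2 : ℝ))))

/-- The region of integration. -/
def A (n : ℕ) : Set (ℝ × ℝ × ℝ × ℝ) :=
  {p | 0 < p.1 ∧ 0 < p.2.1 ∧ 0 < p.2.2.1 ∧ 0 < p.2.2.2 ∧ p.2.2.1 < 1 ∧ 1 ≤ p.2.2.2 ∧ p.2.2.2 < (n : ℝ) ^ ((1:ℝ)/2) ∧ p.1 < (n : ℝ) ^ ((1:ℝ)/4) * p.2.2.1 ^ ((1:ℝ)/2) ∧ p.2.2.1 ^ (-(1/2) : ℝ) * p.2.2.2 ^ (-(1/2) : ℝ) * p.1 ≤ p.2.1}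

lemma aux_G_eq {θ : ℝ} {n : ℕ} (hn : 0 < n) {s t u v : ℝ} (h : (s, t, u, v) ∈ A n) :
    G θ n (s, t, u, v) = (n * s ^ (3 - 2 * θ) * u ^ (-2 : ℝ) * v ^ (-2 : ℝ)) * t ^ (-1 - 2 * θ) := by
  obtain ⟨hs, ht, hu, hv, hu1, hv1, hvn, hsn, hst⟩ := h
  simp only at hs ht hu hv hu1 hv1 hvn hsn hst
  have hn' : (1 : ℝ) ≤ n := by exact_mod_cast hn
  have hn0 : (0 : ℝ) < n := by linarith
  have hU : 0 < u ^ (-2 : ℝ) := rpow_pos_of_pos hu _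
  have hV : 0 < v ^ (-2 : ℝ) := rpow_pos_of_pos hv _
  have hS : 0 < s ^ (4 : ℝ) := rpow_pos_of_pos hs _
  have hU1 : 1 ≤ u ^ (-2 : ℝ) := one_le_rpow_of_pos_of_le_one_of_nonpos hu hu1.le (by norm_num)
  have hV1 : v ^ (-2 : ℝ) ≤ 1 := rpow_le_one_of_one_le_of_nonpos hv1 (by norm_num)
  have hVn : (n : ℝ)⁻¹ ≤ v ^ (-2 : ℝ) := by
    have := rpow_le_rpow_of_nonpos hv hvn.le (z := -2) (by norm_num)
    rw [← rpow_mul hn0.le] at this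
    rw [show (1:ℝ)/2 * -2 = -1 by norm_num, rpow_neg_one] at this
    exact this
  have hT : s ^ (4 : ℝ) * u ^ (-2 : ℝ) * v ^ (-2 : ℝ) ≤ t ^ (4 : ℝ) := by
    have := rpow_le_rpow (by positivity) hst (z := 4) (by norm_num)
    rw [mul_rpow (by positivity) hs.le, mul_rpow (by positivity) (by positivity),
      ← rpow_mul hu.le, ← rpow_mul hv.le] at this
    rw [show (-(1/2) : ℝ) * 4 = -2 by norm_num] at this
    linarith
  have hSn : (n : ℝ)⁻¹ * s ^ (4 : ℝ) * u ^ (-2 : ℝ) ≤ 1 := by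
    have := rpow_le_rpow hs.le hsn.le (z := 4) (by norm_num)
    rw [mul_rpow (by positivity) (by positivity),
      ← rpow_mul hu.le, ← rpow_mul hn0.le] at this
    rw [show (1:ℝ)/2 * 4 = 2 by norm_num, show (1:ℝ)/4 * 4 = 1 by norm_num, rpow_one] at this
    have h2 : u ^ (2 : ℝ) * u ^ (-2 : ℝ) = 1 := by rw [← rpow_add hu]; norm_num
    calc (n : ℝ)⁻¹ * s ^ (4 : ℝ) * u ^ (-2 : ℝ) ≤ (n : ℝ)⁻¹ * (n * u ^ (2 : ℝ)) * u ^ (-2 : ℝ) := by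
          gcongr
      _ = ((n : ℝ)⁻¹ * n) * (u ^ (2 : ℝ) * u ^ (-2 : ℝ)) := by ring
      _ = 1 := by rw [h2, inv_mul_cancel₀ hn0.ne']; norm_num
  have hi : 0 < (n : ℝ)⁻¹ := by positivity
  have hi1 : (n : ℝ)⁻¹ ≤ 1 := inv_le_one_of_one_le₀ hn'
  have hm : min (min (min ((n : ℝ)⁻¹ * s ^ (4 : ℝ) * u ^ (-2 : ℝ) * v ^ (-2 : ℝ))
                  ((n : ℝ)⁻¹ * t ^ (4 : ℝ)))
             (min (s ^ (4 : ℝ) * u ^ (-2 : ℝ)) (t ^ (4 : ℝ) * v ^ (-2 : ℝ))))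
        (min (min (u ^ (-2 : ℝ) * v ^ (-2 : ℝ)) (u ^ (-2 : ℝ)))
             (min 1 (v ^ (-2 : ℝ)))) = (n : ℝ)⁻¹ * s ^ (4 : ℝ) * u ^ (-2 : ℝ) * v ^ (-2 : ℝ) := by
    generalize u ^ (-2 : ℝ) = U at *
    generalize v ^ (-2 : ℝ) = V at *
    generalize s ^ (4 : ℝ) = S at *
    generalize t ^ (4 : ℝ) = T at *
    generalize (n : ℝ)⁻¹ = N at *
    have b1 : N * S * U * V ≤ V := by nlinarith
    have b2 : N * S * U * V ≤ N * T := by nlinarith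
    have b3 : N * S * U * V ≤ S * U := by
      have : N * V ≤ 1 := by nlinarith
      have h3 : 0 < S * U := by positivity
      nlinarith
    have b4 : N * S * U * V ≤ T * V := by
      have h3 : 0 < S * U * V := by positivity
      nlinarith
    have b5 : N * S * U * V ≤ U * V := by nlinarith
    rw [min_eq_left b2, min_eq_left (le_min b3 b4), min_eq_left]
    exact le_min (le_min b5 (by linarith)) (le_min (by linarith) b1)
  unfold G
  simp only
  rw [hm, show (3 - 2 * θ) = (-1 - 2 * θ) + 4 by ring, rpow_add hs]
  field_simp

lemma aux_step (S : Set ℝ) (hS : MeasurableSet S) (hp : ∀ x ∈ S, 0 < x) (g : ℝ → ENNReal)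
    (c r I : ℝ) (hc : 0 ≤ c) (hg : ∀ x ∈ S, g x = ENNReal.ofReal (c * x ^ r))
    (hg0 : ∀ x ∉ S, g x = 0) (hint : IntegrableOn (fun x : ℝ => x ^ r) S)
    (hI : ∫ x in S, x ^ r = I) : ∫⁻ x, g x = ENNReal.ofReal (c * I) := by
  have h1 : g = S.indicator (fun x => ENNReal.ofReal (c * x ^ r)) := by
    funext x
    by_cases hx : x ∈ S
    · rw [indicator_of_mem hx, hg x hx]
    · rw [indicator_of_notMem hx, hg0 x hx]
  rw [h1, lintegral_indicator hS, ← ofReal_integral_eq_lintegral_ofReal (hint.const_mul c),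
    integral_const_mul, hI]
  filter_upwards [ae_restrict_mem hS] with x hx
  have := hp x hx
  simp only [Pi.zero_apply]
  positivity

lemma aux_int_Ioo (b r : ℝ) (hb : 0 ≤ b) (hr : -1 < r) :
    IntegrableOn (fun x : ℝ => x ^ r) (Ioo 0 b) ∧
      ∫ x in Ioo 0 b, x ^ r = b ^ (r + 1) / (r + 1) := by
  have h := (intervalIntegral.intervalIntegrable_rpow' (a := 0) (b := b) hr)
  rw [intervalIntegrable_iff_integrableOn_Ioo_of_le hb] at h
  refine ⟨h, ?_⟩
  rw [← integral_Ioc_eq_integral_Ioo, ← intervalIntegral.integral_of_le hb,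
    integral_rpow (Or.inl hr), zero_rpow (by linarith), sub_zero]

lemma aux_int_Ico (b r : ℝ) (hb : 1 ≤ b) (hr : r < -1) :
    IntegrableOn (fun x : ℝ => x ^ r) (Ico 1 b) ∧
      ∫ x in Ico 1 b, x ^ r = (b ^ (r + 1) - 1) / (r + 1) := by
  have h0 : (0 : ℝ) ∉ uIcc 1 b := by
    rw [uIcc_of_le hb]
    intro h
    linarith [h.1]
  have h := (intervalIntegral.intervalIntegrable_rpow (μ := volume) (a := 1) (b := b) (r := r) (Or.inr h0))
  rw [intervalIntegrable_iff_integrableOn_Ico_of_le hb] at h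
  refine ⟨h, ?_⟩
  rw [integral_Ico_eq_integral_Ioo, ← integral_Ioc_eq_integral_Ioo,
    ← intervalIntegral.integral_of_le hb,
    integral_rpow (Or.inr ⟨hr.ne, h0⟩), one_rpow]

lemma aux_int_Ici (a r : ℝ) (ha : 0 < a) (hr : r < -1) :
    IntegrableOn (fun x : ℝ => x ^ r) (Ici a) ∧
      ∫ x in Ici a, x ^ r = -a ^ (r + 1) / (r + 1) := by
  refine ⟨?_, ?_⟩
  · rw [integrableOn_Ici_iff_integrableOn_Ioi]
    exact integrableOn_Ioi_rpow_of_lt hr ha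
  · rw [integral_Ici_eq_integral_Ioi, integral_Ioi_rpow_of_lt hr ha]

lemma aux_meas_A (n : ℕ) : MeasurableSet (A n) := by
  unfold A
  simp only [Set.setOf_and]
  refine MeasurableSet.inter (measurableSet_lt (by fun_prop) (by fun_prop)) ?_
  refine MeasurableSet.inter (measurableSet_lt (by fun_prop) (by fun_prop)) ?_
  refine MeasurableSet.inter (measurableSet_lt (by fun_prop) (by fun_prop)) ?_
  refine MeasurableSet.inter (measurableSet_lt (by fun_prop) (by fun_prop)) ?_
  refine MeasurableSet.inter (measurableSet_lt (by fun_prop) (by fun_prop)) ?_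
  refine MeasurableSet.inter (measurableSet_le (by fun_prop) (by fun_prop)) ?_
  refine MeasurableSet.inter (measurableSet_lt (by fun_prop) (by fun_prop)) ?_
  refine MeasurableSet.inter (measurableSet_lt (by fun_prop) (by fun_prop)) ?_
  exact measurableSet_le (by fun_prop) (by fun_prop)

lemma aux_meas_G (θ : ℝ) (n : ℕ) : Measurable (G θ n) := by
  unfold G
  fun_prop

lemma aux_tonelli (f : ℝ × ℝ × ℝ × ℝ → ENNReal) (hf : Measurable f) :
    ∫⁻ p, f p = ∫⁻ v, ∫⁻ u, ∫⁻ s, ∫⁻ t, f (s, t, u, v) := by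
  rw [Measure.volume_eq_prod, lintegral_prod_symm _ hf.aemeasurable]
  have h1 : Measurable (fun y : ℝ × ℝ × ℝ => ∫⁻ s, f (s, y)) := hf.lintegral_prod_left'
  rw [Measure.volume_eq_prod, lintegral_prod_symm _ h1.aemeasurable]
  have h2 : Measurable (fun y : ℝ × ℝ => ∫⁻ t, ∫⁻ s, f (s, t, y)) := h1.lintegral_prod_left'
  rw [Measure.volume_eq_prod, lintegral_prod_symm _ h2.aemeasurable]
  refine lintegral_congr fun v => lintegral_congr fun u => ?_
  refine lintegral_lintegral_swap (f := fun t s => f (s, t, u, v)) ?_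
  refine Measurable.aemeasurable ?_
  exact hf.comp (by fun_prop)

lemma aux_main {θ : ℝ} (h0 : 0 < θ) (h1 : θ < 1) {n : ℕ} (hn : 0 < n) :
    ∫ p in A n, G θ n p = (n : ℝ) ^ (2 - θ) * θ ^ (-1 : ℝ) * (1 - θ) ^ (-3 : ℝ) *
      ((1 - ((n : ℝ) ^ ((1 : ℝ) / 2)) ^ (θ - 1)) / 8) := by
  have hn' : (1 : ℝ) ≤ n := by exact_mod_cast hn
  have hn0 : (0 : ℝ) < n := by linarith
  have hθ : 0 < 1 - θ := by linarith
  have hb1 : 1 ≤ (n : ℝ) ^ ((1 : ℝ) / 2) := one_le_rpow hn' (by norm_num)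
  have hb2 : ((n : ℝ) ^ ((1 : ℝ) / 2)) ^ (θ - 1) ≤ 1 :=
    rpow_le_one_of_one_le_of_nonpos hb1 (by linarith)
  have hnn : ∀ p ∈ A n, 0 ≤ G θ n p := by
    rintro ⟨s, t, u, v⟩ h
    rw [aux_G_eq hn h]
    obtain ⟨hs, ht, hu, hv, -⟩ := h
    simp only at hs ht hu hv
    positivity
  rw [integral_eq_lintegral_of_nonneg_ae
    ((ae_restrict_mem (aux_meas_A n)).mono hnn) (aux_meas_G θ n).aestronglyMeasurable]
  rw [← lintegral_indicator (aux_meas_A n), aux_tonelli _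
    ((aux_meas_G θ n).ennreal_ofReal.indicator (aux_meas_A n))]
  set f : ℝ × ℝ × ℝ × ℝ → ENNReal := (A n).indicator (fun p => ENNReal.ofReal (G θ n p)) with hf
  -- inner integral in t
  have k1 : ∀ v ∈ Ico 1 ((n : ℝ) ^ ((1 : ℝ) / 2)), ∀ u ∈ Ioo (0 : ℝ) 1,
      ∀ s ∈ Ioo 0 ((n : ℝ) ^ ((1 : ℝ) / 4) * u ^ ((1 : ℝ) / 2)),
      ∫⁻ t, f (s, t, u, v) = ENNReal.ofReal
        ((n * u ^ (θ - 2) * v ^ (θ - 2) / (2 * θ)) * s ^ (3 - 4 * θ)) := by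
    rintro v ⟨hv1, hvn⟩ u ⟨hu, hu1⟩ s ⟨hs, hsn⟩
    have hv : 0 < v := by linarith
    have ha : 0 < u ^ (-(1/2) : ℝ) * v ^ (-(1/2) : ℝ) * s := by positivity
    obtain ⟨i1, i2⟩ := aux_int_Ici (u ^ (-(1/2) : ℝ) * v ^ (-(1/2) : ℝ) * s) (-1 - 2 * θ) ha
      (by linarith)
    have key : ∀ t, (s, t, u, v) ∈ A n ↔ t ∈ Ici (u ^ (-(1/2) : ℝ) * v ^ (-(1/2) : ℝ) * s) := by
      intro t
      constructor
      · intro h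
        exact h.2.2.2.2.2.2.2.2
      · intro h
        exact ⟨hs, lt_of_lt_of_le ha h, hu, hv, hu1, hv1, hvn, hsn, h⟩
    rw [aux_step _ measurableSet_Ici (fun x hx => lt_of_lt_of_le ha hx) _
      (n * s ^ (3 - 2 * θ) * u ^ (-2 : ℝ) * v ^ (-2 : ℝ)) (-1 - 2 * θ) _ (by positivity)
      ?_ ?_ i1 i2]
    · congr 1
      rw [mul_rpow (by positivity) hs.le, mul_rpow (by positivity) (by positivity),
        ← rpow_mul hu.le, ← rpow_mul hv.le, show -1 - 2 * θ + 1 = -2 * θ by ring,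
        show (-(1/2) : ℝ) * (-2 * θ) = θ by ring, show 3 - 4 * θ = (3 - 2 * θ) + (-2 * θ) by ring,
        rpow_add hs, show θ - 2 = -2 + θ by ring, rpow_add hu, rpow_add hv]
      field_simp
    · intro t ht
      rw [hf, indicator_of_mem ((key t).2 ht), aux_G_eq hn ((key t).2 ht)]
    · intro t ht
      rw [hf, indicator_of_notMem (fun h => ht ((key t).1 h))]
  have k2 : ∀ v ∈ Ico 1 ((n : ℝ) ^ ((1 : ℝ) / 2)), ∀ u ∈ Ioo (0 : ℝ) 1,
      ∫⁻ s, ∫⁻ t, f (s, t, u, v) = ENNReal.ofReal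
        ((n ^ (2 - θ) * v ^ (θ - 2) / (2 * θ * (4 * (1 - θ)))) * u ^ (- θ)) := by
    rintro v hv u hu
    have hv0 : 0 < v := by linarith [hv.1]
    have hu0 : 0 < u := hu.1
    obtain ⟨i1, i2⟩ := aux_int_Ioo ((n : ℝ) ^ ((1 : ℝ) / 4) * u ^ ((1 : ℝ) / 2)) (3 - 4 * θ)
      (by positivity) (by linarith)
    rw [aux_step _ measurableSet_Ioo (fun x hx => hx.1) _ _ _ _ (by positivity)
      (k1 v hv u hu) ?_ i1 i2]
    · congr 1
      rw [mul_rpow (by positivity) (by positivity),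
        ← rpow_mul hu0.le, ← rpow_mul hn0.le, show 3 - 4 * θ + 1 = 4 * (1 - θ) by ring,
        show (1 : ℝ) / 4 * (4 * (1 - θ)) = 1 - θ by ring,
        show (1 : ℝ) / 2 * (4 * (1 - θ)) = 2 - 2 * θ by ring,
        show 2 - θ = 1 + (1 - θ) by ring, rpow_add hn0, rpow_one,
        show - θ = (θ - 2) + (2 - 2 * θ) by ring, rpow_add hu0]
      field_simp
    · intro s hs
      have : ∀ t, f (s, t, u, v) = 0 := by
        intro t
        rw [hf, indicator_of_notMem]
        intro h
        exact hs ⟨h.1, h.2.2.2.2.2.2.2.1⟩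
      simp [this]
  have k3 : ∀ v ∈ Ico 1 ((n : ℝ) ^ ((1 : ℝ) / 2)),
      ∫⁻ u, ∫⁻ s, ∫⁻ t, f (s, t, u, v) = ENNReal.ofReal
        ((n ^ (2 - θ) / (2 * θ * (4 * (1 - θ)) * (1 - θ))) * v ^ (θ - 2)) := by
    rintro v hv
    have hv0 : 0 < v := by linarith [hv.1]
    obtain ⟨i1, i2⟩ := aux_int_Ioo 1 (-θ) (by positivity) (by linarith)
    rw [aux_step _ measurableSet_Ioo (fun x hx => hx.1) _ _ _ _ (by positivity)
      (k2 v hv) ?_ i1 i2]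
    · congr 1
      rw [one_rpow, show -θ + 1 = 1 - θ by ring]
      field_simp
    · intro u hu
      have : ∀ s t, f (s, t, u, v) = 0 := by
        intro s t
        rw [hf, indicator_of_notMem]
        intro h
        exact hu ⟨h.2.2.1, h.2.2.2.2.1⟩
      simp [this]
  obtain ⟨i1, i2⟩ := aux_int_Ico ((n : ℝ) ^ ((1 : ℝ) / 2)) (θ - 2) hb1 (by linarith)
  rw [aux_step _ measurableSet_Ico (fun x hx => lt_of_lt_of_le one_pos hx.1) _ _ _ _ (by positivity)
      k3 ?_ i1 i2]
  · have e : (n ^ (2 - θ) / (2 * θ * (4 * (1 - θ)) * (1 - θ))) *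
        ((((n : ℝ) ^ ((1 : ℝ) / 2)) ^ (θ - 2 + 1) - 1) / (θ - 2 + 1)) =
        (n : ℝ) ^ (2 - θ) * θ ^ (-1 : ℝ) * (1 - θ) ^ (-3 : ℝ) *
      ((1 - ((n : ℝ) ^ ((1 : ℝ) / 2)) ^ (θ - 1)) / 8) := by
      rw [show θ - 2 + 1 = θ - 1 by ring, rpow_neg_one, rpow_neg hθ.le,
        show (3 : ℝ) = ((3 : ℕ) : ℝ) by norm_num, rpow_natCast]
      generalize ((n : ℝ) ^ ((1 : ℝ) / 2)) ^ (θ - 1) = X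
      generalize (n : ℝ) ^ (2 - θ) = Y
      rw [show (X - 1) / (θ - 1) = (1 - X) / (1 - θ) by
        rw [← neg_div_neg_eq]; congr 1 <;> ring]
      field_simp
      ring
    rw [e, ENNReal.toReal_ofReal]
    have : 0 ≤ 1 - ((n : ℝ) ^ ((1 : ℝ) / 2)) ^ (θ - 1) := by linarith
    positivity
  · intro v hv
    have : ∀ u s t, f (s, t, u, v) = 0 := by
      intro u s t
      rw [hf, indicator_of_notMem]
      intro h
      exact hv ⟨h.2.2.2.2.2.1, h.2.2.2.2.2.2.1⟩
    simp [this]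

theorem stmt_14 :
    (∃ C : ℝ, 0 < C ∧ ∀ θ : ℝ, 0 < θ → θ < 1 → ∀ n : ℕ, 0 < n →
      (∫ p in A n, G θ n p) ≤ C * ((n : ℝ) ^ (2 - θ) * θ ^ (-1 : ℝ) * (1 - θ) ^ (-3 : ℝ))) ∧
    (∃ c : ℝ, 0 < c ∧ ∀ θ : ℝ, 0 < θ → θ < 1 → ∀ n : ℕ, 0 < n →
      (8 : ℝ) ≤ (n : ℝ) ^ (1 - θ) →
      c * ((n : ℝ) ^ (2 - θ) * θ ^ (-1 : ℝ) * (1 - θ) ^ (-3 : ℝ)) ≤ ∫ p in A n, G θ n p) := by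
  refine ⟨⟨1, one_pos, ?_⟩, ⟨1 / 16, by norm_num, ?_⟩⟩
  · intro θ h0 h1 n hn
    have hθ : 0 < 1 - θ := by linarith
    have hn0 : (0 : ℝ) < n := by exact_mod_cast hn
    rw [aux_main h0 h1 hn, mul_comm 1]
    gcongr
    have : 0 < ((n : ℝ) ^ ((1 : ℝ) / 2)) ^ (θ - 1) := by positivity
    linarith
  · intro θ h0 h1 n hn h8
    have hθ : 0 < 1 - θ := by linarith
    have hn0 : (0 : ℝ) < n := by exact_mod_cast hn
    rw [aux_main h0 h1 hn, mul_comm (1 / 16)]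
    refine mul_le_mul_of_nonneg_left ?_ (by positivity)
    have hX : 0 < ((n : ℝ) ^ ((1 : ℝ) / 2)) ^ (θ - 1) := by positivity
    have h2 : (((n : ℝ) ^ ((1 : ℝ) / 2)) ^ (θ - 1)) ^ 2 * (n : ℝ) ^ (1 - θ) = 1 := by
      rw [← rpow_mul hn0.le, ← rpow_natCast, ← rpow_mul hn0.le, ← rpow_add hn0]
      rw [show (1 : ℝ) / 2 * (θ - 1) * ((2 : ℕ) : ℝ) + (1 - θ) = 0 by push_cast; ring, rpow_zero]
    have : ((n : ℝ) ^ ((1 : ℝ) / 2)) ^ (θ - 1) ≤ 1 / 2 := by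
      by_contra hcon
      push Not at hcon
      nlinarith
    linarith
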